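/- Uniqueness for CGEDG: Let λ ∈ [1,2], α ≥ 0, φ ∈ Y⁺_{-α,λ}, and let K be a kernel satisfying K(x,y,z) ≤ x̂^{-α} ŷ^{-α} x̌^λ y̌^λ φ(z) for all x, y, z ≥ 0, and in addition, if α > 0, satisfying the bound (min(1, x−z))^{-α} K(x,y,z) ≤ C_α x̂^{-2α} ŷ^{-α} x̌^λ y̌^λ φ(z) for all x ≥ z ≥ 0 and some constant C_α > 0. Then for any initial datum c₀ ∈ Y⁺_{-2α,2λ} and any T ∈ (0,∞], there is at most one weak solution of CGEDG with kernel K and initial datum c₀ on [0,T) taking values in Y⁺_{-2α,2λ}. -/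

import Mathlib

open MeasureTheory Set Filter
open scoped ENNReal Topology

noncomputable section

/-- `x̂ := min 1 x` -/
def hatm (x : ℝ) : ℝ := min 1 x

/-- `x̌ := max 1 x` -/
def checkm (x : ℝ) : ℝ := max 1 x

/-- discrete Laplacian `(Δ_z f)(x) = f(x+z) - 2 f(x) + f(x-z)` -/
def dLap (f : ℝ → ℝ) (z x : ℝ) : ℝ := f (x + z) - 2 * f x + f (x - z)

/-- bounded measurable test function -/
def BddMeas (f : ℝ → ℝ) : Prop := Measurable f ∧ ∃ M : ℝ, ∀ x, |f x| ≤ M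

/-- the weighted L¹ norm `‖c‖_{-β,r} = ∫₀^∞ (x^{-β} + x^r) |c x| dx` -/
def Ynorm (β r : ℝ) (c : ℝ → ℝ) : ℝ :=
  ∫ x in Ioi (0:ℝ), (x ^ (-β) + x ^ r) * |c x|

/-- membership in the weighted space `Y_{-β,r}` -/
def MemY (β r : ℝ) (c : ℝ → ℝ) : Prop :=
  Measurable c ∧ IntegrableOn (fun x => (x ^ (-β) + x ^ r) * |c x|) (Ioi (0:ℝ))

/-- membership in the positive cone `Y⁺_{-β,r}` -/
def MemYplus (β r : ℝ) (c : ℝ → ℝ) : Prop :=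
  MemY β r c ∧ ∀ᵐ x ∂(volume.restrict (Ioi (0:ℝ))), 0 ≤ c x

/-- the moment `M_l(c) = ∫₀^∞ x^l c x dx` -/
def Mom (l : ℝ) (c : ℝ → ℝ) : ℝ := ∫ x in Ioi (0:ℝ), x ^ l * c x

/-- finiteness of the `l`-th moment -/
def MomFin (l : ℝ) (c : ℝ → ℝ) : Prop :=
  IntegrableOn (fun x => x ^ l * c x) (Ioi (0:ℝ))

/-- the mixed moment `M_{-α,λ}(c) = ∫₀^∞ x̂^{-α} x̌^λ c x dx` -/
def MomMix (a lam : ℝ) (c : ℝ → ℝ) : ℝ :=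
  ∫ x in Ioi (0:ℝ), hatm x ^ (-a) * checkm x ^ lam * c x

/-- `‖φ‖₀ = ∫₀^∞ φ` -/
def phiNorm0 (φ : ℝ → ℝ) : ℝ := ∫ z in Ioi (0:ℝ), φ z

/-- `‖φ‖_{0,r} = ∫₀^∞ (1 + z^r) φ(z) dz` -/
def phiNorm (r : ℝ) (φ : ℝ → ℝ) : ℝ := ∫ z in Ioi (0:ℝ), (1 + z ^ r) * φ z

/-- a kernel: measurable, nonnegative, symmetric in the first two arguments,
vanishing for `z > x` -/
structure IsKernel (K : ℝ → ℝ → ℝ → ℝ) : Prop where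
  meas : Measurable (fun p : ℝ × ℝ × ℝ => K p.1 p.2.1 p.2.2)
  nonneg : ∀ x y z, 0 ≤ K x y z
  symm : ∀ x y z, K x y z = K y x z
  vanish : ∀ x y z, x < z → K x y z = 0

/-- the domain `D = {(x,y,z) ∈ [0,∞)³ : x ≥ z, y ≥ z}` -/
def Dcgedg : Set (ℝ × ℝ × ℝ) :=
  {p | 0 ≤ p.1 ∧ 0 ≤ p.2.1 ∧ 0 ≤ p.2.2 ∧ p.2.2 ≤ p.1 ∧ p.2.2 ≤ p.2.1}

/-- weak solution of CGEDG with kernel `K`, initial datum `c₀` on `[0,T)`,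
taking values in `Y⁺_{-β,r}`.  Coordinates: `p = (s, x, y, z)`. -/
structure IsWeakSolution (K : ℝ → ℝ → ℝ → ℝ) (β r : ℝ) (T : ℝ≥0∞)
    (c₀ : ℝ → ℝ) (c : ℝ → ℝ → ℝ) : Prop where
  mem : ∀ t : ℝ, 0 ≤ t → ENNReal.ofReal t < T → MemYplus β r (c t)
  cont : ∀ f : ℝ → ℝ, BddMeas f →
    ContinuousOn (fun t => ∫ x in Ioi (0:ℝ), f x * c t x)
      {t : ℝ | 0 ≤ t ∧ ENNReal.ofReal t < T}
  bdd : ∃ C : ℝ, ∀ t : ℝ, 0 ≤ t → ENNReal.ofReal t < T → Ynorm β r (c t) ≤ C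
  integ : ∀ t : ℝ, 0 ≤ t → ENNReal.ofReal t < T →
    IntegrableOn (fun p : ℝ × ℝ × ℝ × ℝ =>
        K p.2.1 p.2.2.1 p.2.2.2 * c p.1 p.2.1 * c p.1 p.2.2.1)
      ((Ioc (0:ℝ) t) ×ˢ Dcgedg)
  weak : ∀ t : ℝ, 0 ≤ t → ENNReal.ofReal t < T → ∀ f : ℝ → ℝ, BddMeas f →
    (∫ x in Ioi (0:ℝ), f x * (c t x - c₀ x)) =
      ∫ p in (Ioc (0:ℝ) t) ×ˢ Dcgedg,
        dLap f p.2.2.2 p.2.1 *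
          (K p.2.1 p.2.2.1 p.2.2.2 * c p.1 p.2.1 * c p.1 p.2.2.1)

/-- the bound on the second derivative of the kernel in its first argument:
`∂₁² K(x,y,z) ≤ ŷ^{-α} y̌^λ φ(z)` for `x ≥ 0` (together with twice
differentiability in the first argument). -/
def SecondDerivBound (K : ℝ → ℝ → ℝ → ℝ) (a lam : ℝ) (φ : ℝ → ℝ) : Prop :=
  ∀ y z, 0 ≤ y → 0 ≤ z → ∀ x, 0 ≤ x →
    DifferentiableWithinAt ℝ (fun w => K w y z) (Ici 0) x ∧
    DifferentiableWithinAt ℝ (derivWithin (fun w => K w y z) (Ici 0)) (Ici 0) x ∧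
    derivWithin (derivWithin (fun w => K w y z) (Ici 0)) (Ici 0) x ≤
      hatm y ^ (-a) * checkm y ^ lam * φ z

/-- the singular bound `(min(1,x-z))^{-α} K(x,y,z) ≤ Cα x̂^{-2α} ŷ^{-α} x̌^λ y̌^λ φ(z)`
for `x ≥ z ≥ 0`. -/
def SingularBound (K : ℝ → ℝ → ℝ → ℝ) (a lam Ca : ℝ) (φ : ℝ → ℝ) : Prop :=
  ∀ x y z, 0 ≤ y → 0 ≤ z → z ≤ x →
    (min 1 (x - z)) ^ (-a) * K x y z ≤
      Ca * hatm x ^ (-(2*a)) * hatm y ^ (-a) * checkm x ^ lam * checkm y ^ lam * φ z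

/-- the global existence assumption (Assumption 1.3) with parameters `μ, ν, α` and
weight `φ`; here `λ = max μ ν`. -/
structure GlobalExistenceAssumption (K : ℝ → ℝ → ℝ → ℝ) (μ ν a : ℝ) (φ : ℝ → ℝ) :
    Prop where
  hμ : μ ∈ Icc (0:ℝ) 2
  hν : ν ∈ Icc (0:ℝ) 2
  hμν : μ + ν ≤ 3
  hlam : 1 < max μ ν
  ha : 0 ≤ a
  hφ : MemYplus (2*a) (2 * max μ ν) φ
  growth : ∀ x y z, 0 ≤ x → 0 ≤ y → 0 ≤ z →
    K x y z ≤ hatm x ^ (-a) * hatm y ^ (-a) *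
      ((checkm x ^ μ * checkm y ^ ν + checkm x ^ ν * checkm y ^ μ) / 2) * φ z
  deriv2 : SecondDerivBound K a (max μ ν) φ
  sing : 0 < a → ∃ Ca > 0, SingularBound K a (max μ ν) Ca φ

/-- the gelation time of a solution on `[0,T)`:
`T_gel = sup { t ∈ [0,T) : M₂(c_t) < ∞ }` (as an extended real). -/
def gelTime (T : ℝ≥0∞) (c : ℝ → ℝ → ℝ) : ℝ≥0∞ :=
  sSup {s : ℝ≥0∞ | ∃ t : ℝ, s = ENNReal.ofReal t ∧ 0 ≤ t ∧
    ENNReal.ofReal t < T ∧ MomFin 2 (c t)}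

/-- the truncated kernel `K_n` -/
def Ktrunc (K : ℝ → ℝ → ℝ → ℝ) (n : ℕ) (x y z : ℝ) : ℝ :=
  if (1/(n:ℝ) < x ∧ x < n) ∧ (1/(n:ℝ) < y ∧ y < n) ∧ (1/(n:ℝ) < z ∧ z < n) ∧
     (0 < x + z ∧ x + z < n) ∧ (0 < y + z ∧ y + z < n) ∧
     1/(n:ℝ) < x - z ∧ 1/(n:ℝ) < y - z
  then K x y z else 0

/-- the right-hand side of the truncated system; coordinates `p = (z, y)`. -/
def truncRHS (K : ℝ → ℝ → ℝ → ℝ) (n : ℕ) (c : ℝ → ℝ) (x : ℝ) : ℝ :=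
  (∫ p in (Ioi (0:ℝ)) ×ˢ (Ioi (0:ℝ)),
      Ktrunc K n p.2 (x - p.1) p.1 * c p.2 * c (x - p.1))
  - (∫ p in (Ioi (0:ℝ)) ×ˢ (Ioi (0:ℝ)),
      Ktrunc K n x p.2 p.1 * c x * c p.2)
  - (∫ p in (Ioi (0:ℝ)) ×ˢ (Ioi (0:ℝ)),
      Ktrunc K n p.2 x p.1 * c p.2 * c x)
  + (∫ p in (Ioi (0:ℝ)) ×ˢ (Ioi (0:ℝ)),
      Ktrunc K n (x + p.1) p.2 p.1 * c (x + p.1) * c p.2)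

/-- classical solution of the truncated system on `L¹((1/n,n))`, extended by zero
outside `(1/n, n)`. -/
structure IsTruncatedSolution (K : ℝ → ℝ → ℝ → ℝ) (n : ℕ) (c : ℝ → ℝ → ℝ) :
    Prop where
  meas : ∀ t : ℝ, Measurable (c t)
  zero_outside : ∀ t : ℝ, ∀ x, x ∉ Ioo (1/(n:ℝ)) (n:ℝ) → c t x = 0
  integrable : ∀ t : ℝ, 0 ≤ t → IntegrableOn (c t) (Ioo (1/(n:ℝ)) (n:ℝ))
  ode : ∀ x ∈ Ioo (1/(n:ℝ)) (n:ℝ), ∀ t : ℝ, 0 ≤ t →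
    HasDerivWithinAt (fun s => c s x) (truncRHS K n (c t) x) (Ici 0) t

/-- de la Vallée-Poussin class `C_VP` -/
structure IsCVP (σ : ℝ → ℝ) : Prop where
  contDiff : ContDiffOn ℝ 2 σ (Ici 0)
  nonneg : ∀ x, 0 ≤ x → 0 ≤ σ x
  convex : ConvexOn ℝ (Ici 0) σ
  zero : σ 0 = 0
  deriv_zero : derivWithin σ (Ici 0) 0 = 0
  deriv_concave : ConcaveOn ℝ (Ici 0) (derivWithin σ (Ici 0))
  deriv_pos : ∀ x, 0 < x → 0 < derivWithin σ (Ici 0) x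
  deriv_top : Tendsto (derivWithin σ (Ici 0)) atTop atTop
  slope_top : Tendsto (fun x => σ x / x) atTop atTop


/-- weight -/
def omW (a l x : ℝ) : ℝ := |x| ^ (-a) + |x| ^ l

/-- the bundle of pointwise facts used below -/
structure KBd (K : ℝ → ℝ → ℝ → ℝ) (w Φ : ℝ → ℝ) : Prop where
  wm : Measurable w
  w0 : ∀ x, 0 ≤ w x
  w1 : ∀ x, 0 < x → 1 ≤ w x
  Km : Measurable (fun p : ℝ × ℝ × ℝ => K p.1 p.2.1 p.2.2)
  K0 : ∀ x y z, 0 ≤ K x y z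
  Φi : IntegrableOn Φ (Ioi (0:ℝ))
  Φ0 : ∀ z, 0 < z → 0 ≤ Φ z
  b1 : ∀ x y z, 0 < x → 0 < y → 0 < z → z ≤ x → K x y z ≤ w x * w y * Φ z
  b2 : ∀ x y z, 0 < x → 0 < y → 0 < z → z ≤ x →
    K x y z * (w (x + z) + w (x - z) - 2 * w x) ≤ w x * w y * Φ z
  b3 : ∀ x y z, 0 < x → 0 < y → 0 < z → z ≤ x →
    K x y z * (w (x + z) + w (x - z) + 2 * w x) ≤ w x ^ 2 * w y * Φ z

lemma powLap {l x z : ℝ} (h0 : 0 ≤ l) (h2 : l ≤ 2) (hz : 0 ≤ z) (hx : z ≤ x) :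
    (x + z) ^ l + (x - z) ^ l - 2 * x ^ l ≤ 2 * z ^ l := by
  have key : ∀ y : ℝ, 0 ≤ y → y ^ l = (y ^ 2) ^ (l / 2) := by
    intro y hy
    rw [← Real.rpow_natCast, ← Real.rpow_mul hy]
    congr 1; push_cast; ring
  have hx0 : 0 ≤ x := hz.trans hx
  rw [key (x + z) (by linarith), key (x - z) (by linarith), key x hx0, key z hz]
  have hc := (Real.concaveOn_rpow (p := l / 2) (by linarith) (by linarith)).2
    (show (x + z) ^ 2 ∈ Ici (0:ℝ) from mem_Ici.2 (sq_nonneg _)) (show (x - z) ^ 2 ∈ Ici (0:ℝ) from mem_Ici.2 (sq_nonneg _))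
    (show (0:ℝ) ≤ 1 / 2 by norm_num) (show (0:ℝ) ≤ 1 / 2 by norm_num) (by norm_num)
  have hs := Real.rpow_add_le_add_rpow (p := l / 2) (sq_nonneg x) (sq_nonneg z)
    (by linarith) (by linarith)
  simp only [smul_eq_mul] at hc
  rw [show 1 / 2 * (x + z) ^ 2 + 1 / 2 * (x - z) ^ 2 = x ^ 2 + z ^ 2 by ring] at hc
  linarith

lemma om_nonneg (a l x : ℝ) : 0 ≤ omW a l x := by unfold omW; positivity

lemma om_one {a l x : ℝ} (ha : 0 ≤ a) (hl : 0 ≤ l) (hx : 0 < x) : 1 ≤ omW a l x := by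
  unfold omW
  rw [abs_of_pos hx]
  rcases le_total x 1 with h | h
  · have := Real.one_le_rpow_of_pos_of_le_one_of_nonpos hx h (by linarith : -a ≤ 0)
    have := Real.rpow_nonneg hx.le l
    linarith
  · have := Real.one_le_rpow h hl
    have := Real.rpow_nonneg hx.le (-a)
    linarith

lemma hatcheck {a l x : ℝ} (hx : 0 < x) :
    hatm x ^ (-a) * checkm x ^ l ≤ omW a l x := by
  unfold omW hatm checkm
  rw [abs_of_pos hx]
  have h1 := Real.rpow_nonneg hx.le (-a)
  have h2 := Real.rpow_nonneg hx.le l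
  rcases le_total x 1 with h | h
  · rw [min_eq_right h, max_eq_left h]; simp; linarith
  · rw [min_eq_left h, max_eq_right h]; simp; linarith

lemma hat_om {a l x z : ℝ} (ha : 0 ≤ a) (hl : 0 ≤ l) (hz : 0 < z) (hzx : z ≤ x) :
    hatm x ^ (-a) ≤ omW a l z := by
  rcases le_total x 1 with h | h
  · unfold hatm omW
    rw [min_eq_right h, abs_of_pos hz]
    have := Real.rpow_le_rpow_of_nonpos hz hzx (by linarith : -a ≤ 0)
    have := Real.rpow_nonneg hz.le l
    linarith
  · have : hatm x ^ (-a) = 1 := by unfold hatm; rw [min_eq_left h]; simp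
    rw [this]; exact om_one ha hl hz

lemma kbd_of (K : ℝ → ℝ → ℝ → ℝ) (lam a : ℝ) (φ : ℝ → ℝ)
    (hK : IsKernel K) (hlam : lam ∈ Icc (1:ℝ) 2) (ha : 0 ≤ a)
    (hφ : MemYplus a lam φ)
    (hbound : ∀ x y z : ℝ, 0 ≤ x → 0 ≤ y → 0 ≤ z →
      K x y z ≤ hatm x ^ (-a) * hatm y ^ (-a) * checkm x ^ lam * checkm y ^ lam * φ z)
    (hsing : 0 < a → ∃ Ca > 0, SingularBound K a lam Ca φ) :
    ∃ Φ, KBd K (omW a lam) Φ := by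
  have hl0 : (0:ℝ) ≤ lam := by linarith [hlam.1]
  have hatpos : ∀ x : ℝ, 0 < x → 0 < hatm x := fun x hx => lt_min one_pos hx
  have chpos : ∀ x : ℝ, 0 < checkm x := fun x => lt_of_lt_of_le one_pos (le_max_left _ _)
  have φ0 : ∀ z, 0 ≤ z → 0 ≤ φ z := by
    intro z hz
    have := (hK.nonneg 1 1 z).trans (hbound 1 1 z zero_le_one zero_le_one hz)
    simpa [hatm, checkm] using this
  have hb : ∀ x y z, 0 < x → 0 < y → 0 < z → K x y z ≤ omW a lam x * omW a lam y * φ z := by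
    intro x y z hx hy hz
    refine (hbound x y z hx.le hy.le hz.le).trans ?_
    have e : hatm x ^ (-a) * hatm y ^ (-a) * checkm x ^ lam * checkm y ^ lam * φ z
      = (hatm x ^ (-a) * checkm x ^ lam) * (hatm y ^ (-a) * checkm y ^ lam) * φ z := by ring
    rw [e]
    refine mul_le_mul_of_nonneg_right ?_ (φ0 z hz.le)
    refine mul_le_mul (hatcheck hx) (hatcheck hy) ?_ (om_nonneg _ _ _)
    have := hatpos y hy; have := chpos y; positivity
  obtain ⟨Cs, hCs1, hCs⟩ : ∃ Cs : ℝ, 1 ≤ Cs ∧ ∀ x y z, 0 < x → 0 < y → 0 < z → z ≤ x →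
      |x - z| ^ (-a) * K x y z ≤ Cs * (omW a lam x * omW a lam y * (omW a lam z * φ z)) := by
    have hE : ∀ x y z, 0 < z →
        omW a lam x * omW a lam y * φ z ≤ omW a lam x * omW a lam y * (omW a lam z * φ z) := by
      intro x y z hz
      refine mul_le_mul_of_nonneg_left ?_ (mul_nonneg (om_nonneg _ _ _) (om_nonneg _ _ _))
      have := om_one (a := a) ha hl0 hz
      have := φ0 z hz.le
      nlinarith
    rcases ha.eq_or_lt with h0 | hpos
    · refine ⟨1, le_rfl, ?_⟩
      intro x y z hx hy hz hzx
      have : |x - z| ^ (-a) = 1 := by rw [← h0]; simp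
      rw [this, one_mul, one_mul]
      exact (hb x y z hx hy hz).trans (hE x y z hz)
    · obtain ⟨Ca, hCa, hS⟩ := hsing hpos
      refine ⟨max 1 Ca, le_max_left _ _, ?_⟩
      intro x y z hx hy hz hzx
      have h1 : |x - z| ^ (-a) ≤ (min 1 (x - z)) ^ (-a) := by
        rw [abs_of_nonneg (by linarith)]
        rcases le_total (x - z) 1 with h | h
        · rw [min_eq_right h]
        · rw [min_eq_left h, Real.one_rpow]
          exact Real.rpow_le_one_of_one_le_of_nonpos h (by linarith)
      have hEnn : 0 ≤ omW a lam x * omW a lam y * (omW a lam z * φ z) :=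
        mul_nonneg (mul_nonneg (om_nonneg _ _ _) (om_nonneg _ _ _))
          (mul_nonneg (om_nonneg _ _ _) (φ0 z hz.le))
      calc |x - z| ^ (-a) * K x y z ≤ (min 1 (x - z)) ^ (-a) * K x y z :=
            mul_le_mul_of_nonneg_right h1 (hK.nonneg _ _ _)
        _ ≤ _ := hS x y z hy.le hz.le hzx
        _ = Ca * ((hatm x ^ (-a) * checkm x ^ lam) * (hatm y ^ (-a) * checkm y ^ lam)
              * (hatm x ^ (-a) * φ z)) := by
            rw [show -(2 * a) = -a + -a by ring, Real.rpow_add (hatpos x hx)]; ring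
        _ ≤ Ca * (omW a lam x * omW a lam y * (omW a lam z * φ z)) := by
            have p1 := hatpos y hy
            have p2 := chpos y
            have p3 := hatpos x hx
            have p4 := φ0 z hz.le
            refine mul_le_mul_of_nonneg_left ?_ hCa.le
            refine mul_le_mul ?_ ?_ (by positivity)
              (mul_nonneg (om_nonneg _ _ _) (om_nonneg _ _ _))
            · exact mul_le_mul (hatcheck hx) (hatcheck hy) (by positivity) (om_nonneg _ _ _)
            · exact mul_le_mul_of_nonneg_right (hat_om ha hl0 hz hzx) p4
        _ ≤ _ := mul_le_mul_of_nonneg_right (le_max_right _ _) hEnn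
  refine ⟨fun z => (7 + Cs) * (omW a lam z * φ z), ?_, om_nonneg _ _, fun x hx => om_one ha hl0 hx,
    hK.meas, hK.nonneg, ?_, ?_, ?_, ?_, ?_⟩
  · unfold omW; fun_prop
  · refine Integrable.const_mul ?_ _
    refine (hφ.1.2).congr ?_
    filter_upwards [ae_restrict_mem measurableSet_Ioi] with z hz
    have hz : 0 < z := hz
    simp only [omW, abs_of_pos hz, abs_of_nonneg (φ0 z hz.le)]
  · intro z hz
    have := om_nonneg a lam z
    have := φ0 z hz.le
    positivity
  all_goals
    intro x y z hx hy hz hzx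
    have hX := om_one (a := a) ha hl0 hx
    have hY := om_one (a := a) ha hl0 hy
    have hZ := om_one (a := a) ha hl0 hz
    have hp := φ0 z hz.le
    have hKb := hb x y z hx hy hz
    have hK0 := hK.nonneg x y z
    have hE : omW a lam x * omW a lam y * φ z
        ≤ omW a lam x * omW a lam y * (omW a lam z * φ z) := by
      refine mul_le_mul_of_nonneg_left ?_ (by positivity)
      nlinarith
    have hS := hCs x y z hx hy hz hzx
    have hxz : (x + z) ^ (-a) ≤ x ^ (-a) :=
      Real.rpow_le_rpow_of_nonpos hx (by linarith) (by linarith)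
    have hE0 : 0 ≤ omW a lam x * omW a lam y * (omW a lam z * φ z) := by positivity
    set E := omW a lam x * omW a lam y * (omW a lam z * φ z) with hEd
  · have : omW a lam x * omW a lam y * ((7 + Cs) * (omW a lam z * φ z)) = (7 + Cs) * E := by
      rw [hEd]; ring
    rw [this]; nlinarith
  · have e : omW a lam x * omW a lam y * ((7 + Cs) * (omW a lam z * φ z)) = (7 + Cs) * E := by
      rw [hEd]; ring
    rw [e]
    have hP := powLap hl0 hlam.2 hz.le hzx
    have h1 : omW a lam (x + z) + omW a lam (x - z) - 2 * omW a lam x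
        ≤ 2 * z ^ lam + |x - z| ^ (-a) := by
      have hxa := Real.rpow_nonneg hx.le (-a)
      unfold omW
      rw [abs_of_pos hx, abs_of_pos (by linarith : 0 < x + z),
        abs_of_nonneg (by linarith : 0 ≤ x - z)]
      linarith
    have h2 : K x y z * z ^ lam ≤ E := by
      have hz' : z ^ lam ≤ omW a lam z := by
        unfold omW; rw [abs_of_pos hz]; linarith [Real.rpow_nonneg hz.le (-a)]
      calc K x y z * z ^ lam ≤ (omW a lam x * omW a lam y * φ z) * omW a lam z :=
            mul_le_mul hKb hz' (Real.rpow_nonneg hz.le _) (by positivity)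
        _ = E := by rw [hEd]; ring
    have h3 := mul_le_mul_of_nonneg_left h1 hK0
    nlinarith
  · have e : omW a lam x ^ 2 * omW a lam y * ((7 + Cs) * (omW a lam z * φ z))
        = omW a lam x * ((7 + Cs) * E) := by
      rw [hEd]; ring
    rw [e]
    have h4 : (x + z) ^ lam ≤ 4 * x ^ lam := by
      have : (x + z) ^ lam ≤ (2 * x) ^ lam :=
        Real.rpow_le_rpow (by linarith) (by linarith) hl0
      rw [Real.mul_rpow (by norm_num) hx.le] at this
      have h22 : (2:ℝ) ^ lam ≤ 4 := by
        have := Real.rpow_le_rpow_of_exponent_le (x := 2) (by norm_num) hlam.2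
        norm_num at this; exact this
      have := Real.rpow_nonneg hx.le lam
      nlinarith
    have h5 : (x - z) ^ lam ≤ x ^ lam := Real.rpow_le_rpow (by linarith) (by linarith) hl0
    have h1 : omW a lam (x + z) + omW a lam (x - z) + 2 * omW a lam x
        ≤ 7 * omW a lam x + |x - z| ^ (-a) := by
      have hxa := Real.rpow_nonneg hx.le (-a)
      unfold omW
      rw [abs_of_pos hx, abs_of_pos (by linarith : 0 < x + z),
        abs_of_nonneg (by linarith : 0 ≤ x - z)]
      linarith
    have h3 := mul_le_mul_of_nonneg_left h1 hK0
    have h6 : K x y z * omW a lam x ≤ E * omW a lam x :=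
      mul_le_mul_of_nonneg_right (hKb.trans hE) (by linarith)
    have h7 : Cs * E ≤ omW a lam x * (Cs * E) := by
      have : 0 ≤ Cs * E := by positivity
      nlinarith
    nlinarith

lemma restrictD : (volume : Measure (ℝ × ℝ × ℝ)).restrict Dcgedg =
    ((volume.restrict (Ioi (0:ℝ))).prod
      ((volume.restrict (Ioi (0:ℝ))).prod (volume.restrict (Ioi (0:ℝ))))).restrict Dcgedg := by
  have h : (volume : Measure ℝ).restrict (Ioi (0:ℝ)) = volume.restrict (Ici (0:ℝ)) :=
    Measure.restrict_congr_set Ioi_ae_eq_Ici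
  rw [h, Measure.prod_restrict, Measure.prod_restrict, Measure.restrict_restrict_of_subset]
  · rfl
  · rintro ⟨x, y, z⟩ ⟨h1, h2, h3, -, -⟩
    exact ⟨h1, h2, h3⟩

lemma measD : MeasurableSet Dcgedg := by
  unfold Dcgedg
  have mx : Measurable (fun p : ℝ × ℝ × ℝ => p.1) := by fun_prop
  have my : Measurable (fun p : ℝ × ℝ × ℝ => p.2.1) := by fun_prop
  have mz : Measurable (fun p : ℝ × ℝ × ℝ => p.2.2) := by fun_prop
  exact (measurableSet_le measurable_const mx).inter ((measurableSet_le measurable_const my).inter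
    ((measurableSet_le measurable_const mz).inter
      ((measurableSet_le mz mx).inter (measurableSet_le mz my))))

lemma aeD_x {P : ℝ → Prop} (h : ∀ᵐ x ∂(volume.restrict (Ioi (0:ℝ))), P x) :
    ∀ᵐ p ∂((volume : Measure (ℝ × ℝ × ℝ)).restrict Dcgedg), P p.1 := by
  rw [restrictD]
  refine ae_restrict_of_ae ?_
  exact Measure.quasiMeasurePreserving_fst.ae h

lemma aeD_y {P : ℝ → Prop} (h : ∀ᵐ x ∂(volume.restrict (Ioi (0:ℝ))), P x) :
    ∀ᵐ p ∂((volume : Measure (ℝ × ℝ × ℝ)).restrict Dcgedg), P p.2.1 := by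
  rw [restrictD]
  refine ae_restrict_of_ae ?_
  exact Measure.quasiMeasurePreserving_snd.ae (Measure.quasiMeasurePreserving_fst.ae h)

lemma aeD_z {P : ℝ → Prop} (h : ∀ᵐ x ∂(volume.restrict (Ioi (0:ℝ))), P x) :
    ∀ᵐ p ∂((volume : Measure (ℝ × ℝ × ℝ)).restrict Dcgedg), P p.2.2 := by
  rw [restrictD]
  refine ae_restrict_of_ae ?_
  exact Measure.quasiMeasurePreserving_snd.ae (Measure.quasiMeasurePreserving_snd.ae h)

lemma aeD : ∀ᵐ p ∂((volume : Measure (ℝ × ℝ × ℝ)).restrict Dcgedg),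
    0 < p.1 ∧ 0 < p.2.1 ∧ 0 < p.2.2 ∧ p.2.2 ≤ p.1 := by
  have h : ∀ᵐ x ∂(volume.restrict (Ioi (0:ℝ))), 0 < x := ae_restrict_mem measurableSet_Ioi
  filter_upwards [aeD_x h, aeD_y h, aeD_z h, ae_restrict_mem measD] with p h1 h2 h3 h4
  exact ⟨h1, h2, h3, h4.2.2.2.1⟩

lemma prodD_int {g1 g2 g3 : ℝ → ℝ} (h1 : IntegrableOn g1 (Ioi 0)) (h2 : IntegrableOn g2 (Ioi 0))
    (h3 : IntegrableOn g3 (Ioi 0)) :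
    IntegrableOn (fun p : ℝ × ℝ × ℝ => g1 p.1 * (g2 p.2.1 * g3 p.2.2)) Dcgedg := by
  rw [IntegrableOn, restrictD]
  exact (Integrable.mul_prod h1 (Integrable.mul_prod h2 h3)).restrict

lemma tri_int {F : ℝ × ℝ × ℝ → ℝ} {g1 g2 g3 : ℝ → ℝ}
    (hF : Measurable F)
    (h1 : IntegrableOn g1 (Ioi 0)) (h2 : IntegrableOn g2 (Ioi 0)) (h3 : IntegrableOn g3 (Ioi 0))
    (hb : ∀ᵐ p ∂((volume : Measure (ℝ × ℝ × ℝ)).restrict Dcgedg),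
      |F p| ≤ g1 p.1 * (g2 p.2.1 * g3 p.2.2)) : IntegrableOn F Dcgedg :=
  Integrable.mono' (prodD_int h1 h2 h3) hF.aestronglyMeasurable hb

lemma tri_le {F : ℝ × ℝ × ℝ → ℝ} {g1 g2 g3 : ℝ → ℝ}
    (hF : IntegrableOn F Dcgedg)
    (h1 : IntegrableOn g1 (Ioi 0)) (h2 : IntegrableOn g2 (Ioi 0)) (h3 : IntegrableOn g3 (Ioi 0))
    (n1 : ∀ x, 0 < x → 0 ≤ g1 x) (n2 : ∀ x, 0 < x → 0 ≤ g2 x) (n3 : ∀ x, 0 < x → 0 ≤ g3 x)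
    (hb : ∀ᵐ p ∂((volume : Measure (ℝ × ℝ × ℝ)).restrict Dcgedg),
      F p ≤ g1 p.1 * (g2 p.2.1 * g3 p.2.2)) :
    ∫ p in Dcgedg, F p ≤
      (∫ x in Ioi (0:ℝ), g1 x) * ((∫ x in Ioi (0:ℝ), g2 x) * (∫ x in Ioi (0:ℝ), g3 x)) := by
  refine (integral_mono_ae hF (prodD_int h1 h2 h3) hb).trans ?_
  rw [← integral_prod_mul, ← integral_prod_mul (f := g1) (g := fun q : ℝ × ℝ => g2 q.1 * g3 q.2),
    restrictD]
  refine setIntegral_le_integral (Integrable.mul_prod h1 (Integrable.mul_prod h2 h3)) ?_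
  have h : ∀ᵐ x ∂(volume.restrict (Ioi (0:ℝ))), 0 < x := ae_restrict_mem measurableSet_Ioi
  have e1 := (Measure.quasiMeasurePreserving_fst (μ := volume.restrict (Ioi (0:ℝ)))
    (ν := (volume.restrict (Ioi (0:ℝ))).prod (volume.restrict (Ioi (0:ℝ))))).ae h
  have e2 := (Measure.quasiMeasurePreserving_snd (μ := volume.restrict (Ioi (0:ℝ)))
    (ν := (volume.restrict (Ioi (0:ℝ))).prod (volume.restrict (Ioi (0:ℝ))))).ae
    (Measure.quasiMeasurePreserving_fst.ae h)
  have e3 := (Measure.quasiMeasurePreserving_snd (μ := volume.restrict (Ioi (0:ℝ)))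
    (ν := (volume.restrict (Ioi (0:ℝ))).prod (volume.restrict (Ioi (0:ℝ))))).ae
    (Measure.quasiMeasurePreserving_snd.ae h)
  filter_upwards [e1, e2, e3] with p a1 a2 a3
  exact mul_nonneg (n1 _ a1) (mul_nonneg (n2 _ a2) (n3 _ a3))

/-- admissible functions -/
def Good (w g : ℝ → ℝ) : Prop :=
  Measurable g ∧ IntegrableOn (fun x => w x ^ 2 * |g x|) (Ioi (0:ℝ))

def I1 (w g : ℝ → ℝ) : ℝ := ∫ x in Ioi (0:ℝ), w x * |g x|
def I2 (w g : ℝ → ℝ) : ℝ := ∫ x in Ioi (0:ℝ), w x ^ 2 * |g x|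

def Gop (K : ℝ → ℝ → ℝ → ℝ) (f g h : ℝ → ℝ) : ℝ :=
  ∫ p in Dcgedg, dLap f p.2.2 p.1 * (K p.1 p.2.1 p.2.2 * g p.1 * h p.2.1)

section
variable {K : ℝ → ℝ → ℝ → ℝ} {w Φ : ℝ → ℝ}

lemma Good.i1 (hw : KBd K w Φ) {g : ℝ → ℝ} (hg : Good w g) :
    IntegrableOn (fun x => w x * |g x|) (Ioi (0:ℝ)) := by
  refine Integrable.mono' hg.2 ?_ ?_
  · have := hw.wm; have := hg.1
    exact (by fun_prop : Measurable (fun x => w x * |g x|)).aestronglyMeasurable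
  · filter_upwards [ae_restrict_mem measurableSet_Ioi] with x hx
    have h1 := hw.w1 x hx
    rw [Real.norm_eq_abs, abs_of_nonneg (by positivity)]
    refine mul_le_mul_of_nonneg_right ?_ (abs_nonneg _)
    nlinarith

lemma Good.i0 (hw : KBd K w Φ) {g : ℝ → ℝ} (hg : Good w g) :
    IntegrableOn g (Ioi (0:ℝ)) := by
  refine Integrable.mono' (hg.i1 hw) hg.1.aestronglyMeasurable ?_
  filter_upwards [ae_restrict_mem measurableSet_Ioi] with x hx
  have h1 := hw.w1 x hx
  rw [Real.norm_eq_abs]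
  nlinarith [abs_nonneg (g x)]

lemma I1_le_I2 (hw : KBd K w Φ) {g : ℝ → ℝ} (hg : Good w g) : I1 w g ≤ I2 w g := by
  refine setIntegral_mono_on (hg.i1 hw) hg.2 measurableSet_Ioi ?_
  intro x hx
  have h1 := hw.w1 x hx
  refine mul_le_mul_of_nonneg_right ?_ (abs_nonneg _)
  nlinarith

lemma I1_nonneg (hw : KBd K w Φ) (g : ℝ → ℝ) : 0 ≤ I1 w g :=
  integral_nonneg fun x => mul_nonneg (hw.w0 x) (abs_nonneg _)

lemma I2_nonneg (w g : ℝ → ℝ) : 0 ≤ I2 w g :=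
  integral_nonneg fun x => mul_nonneg (sq_nonneg _) (abs_nonneg _)

lemma Good.sub (hw : KBd K w Φ) {g h : ℝ → ℝ} (hg : Good w g) (hh : Good w h) :
    Good w (fun x => g x - h x) := by
  refine ⟨hg.1.sub hh.1, Integrable.mono' (hg.2.add hh.2) ?_ ?_⟩
  · have := hw.wm; have := hg.1; have := hh.1
    exact (by fun_prop : Measurable (fun x => w x ^ 2 * |g x - h x|)).aestronglyMeasurable
  · refine Eventually.of_forall fun x => ?_
    rw [Real.norm_eq_abs, abs_of_nonneg (by positivity)]
    have := abs_sub (g x) (h x)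
    simp only [Pi.add_apply]
    nlinarith [sq_nonneg (w x)]

lemma I2_sub_le (hw : KBd K w Φ) {g h : ℝ → ℝ} (hg : Good w g) (hh : Good w h) :
    I2 w (fun x => g x - h x) ≤ I2 w g + I2 w h := by
  unfold I2
  rw [← integral_add hg.2 hh.2]
  refine integral_mono (hg.sub hw hh).2 (hg.2.add hh.2) fun x => ?_
  have := abs_sub (g x) (h x)
  simp only
  nlinarith [sq_nonneg (w x)]

lemma dLap_meas {f : ℝ → ℝ} (hf : Measurable f) :
    Measurable (fun p : ℝ × ℝ × ℝ => dLap f p.2.2 p.1) := by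
  unfold dLap; fun_prop

lemma dLap_abs {f : ℝ → ℝ} {M : ℝ} (hM : ∀ x, |f x| ≤ M) (z x : ℝ) : |dLap f z x| ≤ 4 * M := by
  unfold dLap
  have h1 := abs_le.1 (hM (x + z)); have h2 := abs_le.1 (hM x); have h3 := abs_le.1 (hM (x - z))
  rw [abs_le]; constructor <;> linarith

lemma Gint_meas (hw : KBd K w Φ) {f g h : ℝ → ℝ} (hf : Measurable f) (hg : Measurable g)
    (hh : Measurable h) : Measurable (fun p : ℝ × ℝ × ℝ =>
      dLap f p.2.2 p.1 * (K p.1 p.2.1 p.2.2 * g p.1 * h p.2.1)) := by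
  have := hw.Km; have := dLap_meas hf
  fun_prop

lemma Gpt (hw : KBd K w Φ) {f g h : ℝ → ℝ} {M : ℝ} (hM : ∀ x, |f x| ≤ M) :
    ∀ᵐ p ∂((volume : Measure (ℝ × ℝ × ℝ)).restrict Dcgedg),
      |dLap f p.2.2 p.1 * (K p.1 p.2.1 p.2.2 * g p.1 * h p.2.1)| ≤
        (4 * M * (w p.1 * |g p.1|)) * ((w p.2.1 * |h p.2.1|) * Φ p.2.2) := by
  filter_upwards [aeD] with ⟨x, y, z⟩ ⟨hx, hy, hz, hzx⟩
  simp only at *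
  have h1 := dLap_abs hM z x
  have h2 := hw.b1 x y z hx hy hz hzx
  have h3 := hw.K0 x y z
  rw [abs_mul, abs_mul, abs_mul, abs_of_nonneg h3]
  have hM0 : 0 ≤ M := (abs_nonneg _).trans (hM 0)
  calc |dLap f z x| * (K x y z * |g x| * |h y|)
      ≤ (4 * M) * ((w x * w y * Φ z) * |g x| * |h y|) := by
        gcongr
    _ = _ := by ring

lemma G_int (hw : KBd K w Φ) {f g h : ℝ → ℝ} (hf : BddMeas f) (hg : Good w g)
    (hh : Good w h) : IntegrableOn (fun p : ℝ × ℝ × ℝ =>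
      dLap f p.2.2 p.1 * (K p.1 p.2.1 p.2.2 * g p.1 * h p.2.1)) Dcgedg := by
  obtain ⟨M, hM⟩ := hf.2
  exact tri_int (Gint_meas hw hf.1 hg.1 hh.1) ((hg.i1 hw).const_mul (4 * M)) (hh.i1 hw) hw.Φi
    (Gpt hw hM)

lemma G_abs (hw : KBd K w Φ) {f g h : ℝ → ℝ} (hf : Measurable f) {M : ℝ} (hM : ∀ x, |f x| ≤ M)
    (hg : Good w g) (hh : Good w h) :
    |Gop K f g h| ≤ 4 * M * I1 w g * (I1 w h * ∫ z in Ioi (0:ℝ), Φ z) := by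
  have hM0 : 0 ≤ M := (abs_nonneg _).trans (hM 0)
  have h1 : |Gop K f g h| ≤ _ := abs_integral_le_integral_abs
  refine h1.trans ((tri_le (G_int hw ⟨hf, M, hM⟩ hg hh).abs ((hg.i1 hw).const_mul (4 * M))
    (hh.i1 hw) hw.Φi ?_ ?_ hw.Φ0 (Gpt hw hM)).trans_eq ?_)
  · intro x _; have := hw.w0 x; positivity
  · intro x _; have := hw.w0 x; positivity
  · rw [integral_const_mul]; rfl

/-- second part -/
lemma G_snd (hw : KBd K w Φ) {f g h : ℝ → ℝ} (hf : BddMeas f) (hfw : ∀ x, |f x| ≤ w x)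
    (hg : Good w g) (hh : Good w h) :
    Gop K f g h ≤ I2 w g * (I1 w h * ∫ z in Ioi (0:ℝ), Φ z) := by
  refine tri_le (G_int hw hf hg hh) hg.2 (hh.i1 hw) hw.Φi ?_ ?_ hw.Φ0 ?_
  · intro x _; positivity
  · intro x _; have := hw.w0 x; positivity
  filter_upwards [aeD] with ⟨x, y, z⟩ ⟨hx, hy, hz, hzx⟩
  simp only at *
  have h2 := hw.b3 x y z hx hy hz hzx
  have h3 := hw.K0 x y z
  have hd : |dLap f z x| ≤ w (x + z) + w (x - z) + 2 * w x := by
    unfold dLap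
    have h1 := abs_le.1 (hfw (x + z)); have h2 := abs_le.1 (hfw x)
    have h3 := abs_le.1 (hfw (x - z))
    rw [abs_le]; constructor <;> linarith
  refine (le_abs_self _).trans ?_
  rw [abs_mul, abs_mul, abs_mul, abs_of_nonneg h3]
  calc |dLap f z x| * (K x y z * |g x| * |h y|)
      ≤ (w (x + z) + w (x - z) + 2 * w x) * (K x y z * |g x| * |h y|) := by gcongr
    _ = (K x y z * (w (x + z) + w (x - z) + 2 * w x)) * |g x| * |h y| := by ring
    _ ≤ (w x ^ 2 * w y * Φ z) * |g x| * |h y| := by gcongr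
    _ = _ := by ring

/-- first part -/
lemma G_fst (hw : KBd K w Φ) {s g h e : ℝ → ℝ} {n : ℝ} (hn : 0 ≤ n) (hs : Measurable s)
    (hs1 : ∀ x, |s x| ≤ 1) (hg : Good w g) (hh : Good w h) (he : Good w e)
    (hh0 : ∀ᵐ x ∂(volume.restrict (Ioi (0:ℝ))), 0 ≤ h x)
    (hse : ∀ x, |g x| - s x * g x ≤ 2 * |e x|) :
    Gop K (fun x => s x * min (w x) n) g h ≤
      (I1 w g + 4 * n * I1 w e) * (I1 w h * ∫ z in Ioi (0:ℝ), Φ z) := by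
  have hmin0 : ∀ x, 0 ≤ min (w x) n := fun x => le_min (hw.w0 x) hn
  have hf : BddMeas (fun x => s x * min (w x) n) := by
    refine ⟨by have := hw.wm; fun_prop, n, fun x => ?_⟩
    rw [abs_mul, abs_of_nonneg (hmin0 x)]
    calc |s x| * min (w x) n ≤ 1 * n := by gcongr; exacts [hmin0 x, hs1 x, min_le_right _ _]
      _ = n := one_mul n
  have hbig : I1 w g + 4 * n * I1 w e =
      ∫ x in Ioi (0:ℝ), (w x * |g x| + 4 * n * (w x * |e x|)) := by
    rw [integral_add (hg.i1 hw) ((he.i1 hw).const_mul _), integral_const_mul]; rfl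
  rw [hbig]
  refine tri_le (G_int hw hf hg hh) ((hg.i1 hw).add ((he.i1 hw).const_mul _)) (hh.i1 hw) hw.Φi
    ?_ ?_ hw.Φ0 ?_
  · intro x _; have := hw.w0 x; positivity
  · intro x _; have := hw.w0 x; positivity
  filter_upwards [aeD, aeD_y hh0] with ⟨x, y, z⟩ ⟨hx, hy, hz, hzx⟩ hy0
  simp only at *
  have k0 := hw.K0 x y z
  have k1 := hw.b1 x y z hx hy hz hzx
  have k2 := hw.b2 x y z hx hy hz hzx
  have hΦ := hw.Φ0 z hz
  have wx := hw.w0 x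
  have wy := hw.w0 y
  rw [abs_of_nonneg hy0]
  have key : ∀ u, s u * min (w u) n * g x ≤ min (w u) n * |g x| := by
    intro u
    have h1 : s u * g x ≤ |g x| := by
      refine (le_abs_self _).trans ?_
      rw [abs_mul]; exact mul_le_of_le_one_left (abs_nonneg _) (hs1 u)
    nlinarith [hmin0 u]
  have hd : dLap (fun x => s x * min (w x) n) z x * g x ≤
      (min (w (x + z)) n + min (w (x - z)) n - 2 * min (w x) n) * |g x|
        + 4 * n * |e x| := by
    unfold dLap
    have h1 := key (x + z)
    have h2 := key (x - z)
    have h3 : min (w x) n * (|g x| - s x * g x) ≤ n * (2 * |e x|) :=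
      (mul_le_mul_of_nonneg_left (hse x) (hmin0 x)).trans
        (mul_le_mul_of_nonneg_right (min_le_right _ _) (by positivity))
    nlinarith
  have hL : K x y z * (min (w (x + z)) n + min (w (x - z)) n - 2 * min (w x) n)
      ≤ w x * w y * Φ z := by
    rcases le_total (w x) n with hc | hc
    · rw [min_eq_left hc]
      refine le_trans (mul_le_mul_of_nonneg_left ?_ k0) k2
      linarith [min_le_left (w (x + z)) n, min_le_left (w (x - z)) n]
    · rw [min_eq_right hc]
      have : K x y z * (min (w (x + z)) n + min (w (x - z)) n - 2 * n) ≤ 0 :=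
        mul_nonpos_of_nonneg_of_nonpos k0
          (by linarith [min_le_right (w (x + z)) n, min_le_right (w (x - z)) n])
      exact this.trans (by positivity)
  calc dLap (fun x => s x * min (w x) n) z x * (K x y z * g x * h y)
      = (dLap (fun x => s x * min (w x) n) z x * g x) * (K x y z * h y) := by ring
    _ ≤ ((min (w (x + z)) n + min (w (x - z)) n - 2 * min (w x) n) * |g x|
        + 4 * n * |e x|) * (K x y z * h y) := by gcongr
    _ = (K x y z * (min (w (x + z)) n + min (w (x - z)) n - 2 * min (w x) n)) * (|g x| * h y)
        + K x y z * (4 * n * |e x| * h y) := by ring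
    _ ≤ (w x * w y * Φ z) * (|g x| * h y) + (w x * w y * Φ z) * (4 * n * |e x| * h y) := by
        gcongr
    _ = _ := by ring

end

lemma mono_of_small {H : ℝ → ℝ} {T0 : ℝ} (hT0 : 0 ≤ T0)
    (h : ∀ ε > 0, ∃ δ > 0, ∀ s t, 0 ≤ s → s ≤ t → t ≤ T0 → t - s < δ → H t - H s ≤ ε * (t - s)) :
    H T0 ≤ H 0 := by
  refine le_of_forall_pos_le_add fun ε hε => ?_
  obtain ⟨δ, hδ, hh⟩ := h (ε / (T0 + 1)) (by positivity)
  obtain ⟨n, hn⟩ := exists_nat_gt (T0 / δ)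
  have hn0 : (0:ℝ) < n := lt_of_le_of_lt (by positivity) hn
  have hstep : T0 / n < δ := by
    rw [div_lt_iff₀ hδ] at hn
    rw [div_lt_iff₀ hn0]; linarith
  have ind : ∀ k : ℕ, k ≤ n → H (k * (T0 / n)) - H 0 ≤ ε / (T0 + 1) * (k * (T0 / n)) := by
    intro k
    induction k with
    | zero => intro _; simp
    | succ k ih =>
      intro hk
      have h1 := ih (by omega)
      have hq : 0 ≤ T0 / n := by positivity
      have h2 := hh (k * (T0 / n)) ((k + 1 : ℕ) * (T0 / n)) (by positivity)
        (by push_cast; nlinarith)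
        (by
          have : ((k + 1 : ℕ) : ℝ) * (T0 / n) ≤ n * (T0 / n) :=
            mul_le_mul_of_nonneg_right (by exact_mod_cast hk) hq
          rwa [mul_div_cancel₀ _ hn0.ne'] at this)
        (by push_cast; linarith)
      push_cast at *
      linarith
  have := ind n le_rfl
  rw [mul_div_cancel₀ _ hn0.ne'] at this
  have h3 : ε / (T0 + 1) * T0 ≤ ε := by
    rw [div_mul_eq_mul_div, div_le_iff₀ (by positivity)]; nlinarith
  linarith

lemma gron {u : ℝ → ℝ} {T0 C : ℝ} (hT0 : 0 ≤ T0) (hu : ContinuousOn u (Icc 0 T0))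
    (h0 : ∀ t ∈ Icc 0 T0, 0 ≤ u t) (hC : 0 ≤ C)
    (h : ∀ t ∈ Icc 0 T0, u t ≤ C * ∫ s in (0:ℝ)..t, u s) : ∀ t ∈ Icc 0 T0, u t = 0 := by
  set v : ℝ → ℝ := IccExtend hT0 ((Icc 0 T0).domRestrict u) with hv
  have vc : Continuous v := (continuousOn_iff_continuous_domRestrict.1 hu).Icc_extend'
  have ve : ∀ t ∈ Icc 0 T0, v t = u t := fun t ht => by
    rw [hv, IccExtend_of_mem _ _ ht]; rfl
  have vi : ∀ t ∈ Icc 0 T0, ∫ s in (0:ℝ)..t, v s = ∫ s in (0:ℝ)..t, u s := by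
    intro t ht
    refine intervalIntegral.integral_congr fun s hs => ve s ?_
    rw [uIcc_of_le ht.1] at hs
    exact ⟨hs.1, hs.2.trans ht.2⟩
  have hd : ∀ t, HasDerivAt (fun t => ∫ s in (0:ℝ)..t, v s) (v t) t := fun t =>
    intervalIntegral.integral_hasDerivAt_right (vc.intervalIntegrable _ _)
      (vc.stronglyMeasurableAtFilter _ _) vc.continuousAt
  have key := eq_zero_of_abs_deriv_le_mul_abs_self_of_eq_zero_right
    (f := fun t => ∫ s in (0:ℝ)..t, v s) (f' := v) (K := C) (a := 0) (b := T0)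
    (fun t _ => (hd t).continuousAt.continuousWithinAt)
    (fun t _ => (hd t).hasDerivWithinAt) (by simp) (by
      intro t ht
      have ht' : t ∈ Icc 0 T0 := Ico_subset_Icc_self ht
      rw [Real.norm_eq_abs, Real.norm_eq_abs, ve t ht', abs_of_nonneg (h0 t ht'), vi t ht']
      exact (h t ht').trans (mul_le_mul_of_nonneg_left (le_abs_self _) hC))
  intro t ht
  have h1 := key t ht
  rw [vi t ht] at h1
  have h2 := h t ht
  rw [h1] at h2
  linarith [h0 t ht]

/-- sign with values in `{1,-1}` -/
def sgf (g : ℝ → ℝ) (x : ℝ) : ℝ := if 0 ≤ g x then 1 else -1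

lemma sgf_meas {g : ℝ → ℝ} (hg : Measurable g) : Measurable (sgf g) :=
  Measurable.ite (measurableSet_le measurable_const hg) measurable_const measurable_const

lemma sgf_abs (g : ℝ → ℝ) (x : ℝ) : |sgf g x| ≤ 1 := by
  unfold sgf; split_ifs <;> simp

lemma sgf_mul (g : ℝ → ℝ) (x : ℝ) : sgf g x * g x = |g x| := by
  unfold sgf; split_ifs with h
  · rw [abs_of_nonneg h, one_mul]
  · rw [abs_of_neg (not_le.1 h)]; ring

lemma sgf_le (g : ℝ → ℝ) (x y : ℝ) : sgf g x * y ≤ |y| := by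
  refine (le_abs_self _).trans ?_
  rw [abs_mul]; exact mul_le_of_le_one_left (abs_nonneg _) (sgf_abs g x)

lemma sgf_err (g : ℝ → ℝ) (x y : ℝ) : |y| - sgf g x * y ≤ 2 * |g x - y| := by
  have h1 := sgf_mul g x
  have h2 := sgf_le g x (g x - y)
  have h3 : |y| ≤ |g x| + |g x - y| := by
    have := abs_sub_abs_le_abs_sub y (g x)
    rw [abs_sub_comm] at this; linarith
  nlinarith

section
variable {K : ℝ → ℝ → ℝ → ℝ} {w Φ : ℝ → ℝ}

lemma I1_interp (hw : KBd K w Φ) {g : ℝ → ℝ} (hg : Good w g) {R : ℝ} (hR : 0 < R) :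
    I1 w g ≤ (∫ x in Ioi (0:ℝ), min (w x) R * |g x|) + I2 w g / R := by
  have hm : IntegrableOn (fun x => min (w x) R * |g x|) (Ioi (0:ℝ)) := by
    refine Integrable.mono' (hg.i1 hw) ?_ (Eventually.of_forall fun x => ?_)
    · have := hw.wm; have := hg.1
      exact (by fun_prop : Measurable (fun x => min (w x) R * |g x|)).aestronglyMeasurable
    · have := hw.w0 x
      rw [Real.norm_eq_abs, abs_of_nonneg (by positivity)]
      gcongr; exact min_le_left _ _
  unfold I1 I2
  rw [← integral_div, ← integral_add hm (hg.2.div_const R)]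
  refine integral_mono (hg.i1 hw) (hm.add (hg.2.div_const R)) fun x => ?_
  have h0 := hw.w0 x
  have h1 : w x ≤ min (w x) R + w x ^ 2 / R := by
    rcases le_total (w x) R with h | h
    · rw [min_eq_left h]; have : 0 ≤ w x ^ 2 / R := by positivity
      linarith
    · rw [min_eq_right h]
      have : w x ≤ w x ^ 2 / R := by rw [le_div_iff₀ hR]; nlinarith
      linarith
  calc w x * |g x| ≤ (min (w x) R + w x ^ 2 / R) * |g x| := by gcongr
    _ = _ := by ring

lemma trunc_int (hw : KBd K w Φ) {g : ℝ → ℝ} (hg : Good w g) {R : ℝ} (hR : 0 ≤ R) :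
    IntegrableOn (fun x => min (w x) R * |g x|) (Ioi (0:ℝ)) := by
  refine Integrable.mono' (hg.i1 hw) ?_ (Eventually.of_forall fun x => ?_)
  · have := hw.wm; have := hg.1
    exact (by fun_prop : Measurable (fun x => min (w x) R * |g x|)).aestronglyMeasurable
  · have := hw.w0 x
    rw [Real.norm_eq_abs, abs_of_nonneg (by positivity)]
    gcongr; exact min_le_left _ _

lemma trunc_le (hw : KBd K w Φ) {g : ℝ → ℝ} (hg : Good w g) {R : ℝ} (hR : 0 ≤ R) :
    (∫ x in Ioi (0:ℝ), min (w x) R * |g x|) ≤ R * ∫ x in Ioi (0:ℝ), |g x| := by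
  rw [← integral_const_mul]
  refine integral_mono (trunc_int hw hg hR) ((hg.i0 hw).abs.const_mul R) fun x => ?_
  simp only
  gcongr; exact min_le_right _ _

lemma bdd_mul_int (hw : KBd K w Φ) {f g : ℝ → ℝ} (hf : BddMeas f) (hg : Good w g) :
    IntegrableOn (fun x => f x * g x) (Ioi (0:ℝ)) := by
  obtain ⟨M, hM⟩ := hf.2
  exact Integrable.bdd_mul (hg.i0 hw) hf.1.aestronglyMeasurable
    (Eventually.of_forall fun x => hM x)

lemma G_split (hw : KBd K w Φ) {f c d : ℝ → ℝ} (hf : BddMeas f) (hc : Good w c) (hd : Good w d) :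
    Gop K f c c - Gop K f d d =
      Gop K f (fun x => c x - d x) c + Gop K f d (fun x => c x - d x) := by
  unfold Gop
  have hW := hc.sub hw hd
  rw [← integral_sub (G_int hw hf hc hc) (G_int hw hf hd hd),
    ← integral_add (G_int hw hf hW hc) (G_int hw hf hd hW)]
  congr 1; ext p; ring

theorem abs_unique (hw : KBd K w Φ) {c d : ℝ → ℝ → ℝ} {T0 M : ℝ}
    (hT0 : 0 ≤ T0)
    (gc : ∀ s ∈ Icc 0 T0, Good w (c s)) (gd : ∀ s ∈ Icc 0 T0, Good w (d s))
    (pc : ∀ s ∈ Icc 0 T0, ∀ᵐ x ∂(volume.restrict (Ioi (0:ℝ))), 0 ≤ c s x)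
    (mc : ∀ s ∈ Icc 0 T0, I2 w (c s) ≤ M) (md : ∀ s ∈ Icc 0 T0, I2 w (d s) ≤ M)
    (hint : ∀ f, BddMeas f →
      IntegrableOn (fun s => Gop K f (c s) (c s) - Gop K f (d s) (d s)) (Ioc 0 T0))
    (hweak : ∀ f, BddMeas f → ∀ t ∈ Icc 0 T0,
      ∫ x in Ioi (0:ℝ), f x * (c t x - d t x) =
        ∫ s in Ioc 0 t, (Gop K f (c s) (c s) - Gop K f (d s) (d s))) :
    ∀ t ∈ Icc 0 T0, I1 w (fun x => c t x - d t x) = 0 := by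
  set W : ℝ → ℝ → ℝ := fun s x => c s x - d s x with hWd
  set A := ∫ z in Ioi (0:ℝ), Φ z with hA
  have A0 : 0 ≤ A := setIntegral_nonneg measurableSet_Ioi fun z hz => hw.Φ0 z hz
  have M0 : 0 ≤ M := (I2_nonneg _ _).trans (mc 0 ⟨le_rfl, hT0⟩)
  have gW : ∀ s ∈ Icc 0 T0, Good w (W s) := fun s hs => (gc s hs).sub hw (gd s hs)
  have mW : ∀ s ∈ Icc 0 T0, I2 w (W s) ≤ 2 * M := fun s hs => by
    have := I2_sub_le hw (gc s hs) (gd s hs); linarith [mc s hs, md s hs]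
  have ii : ∀ f, BddMeas f → ∀ s t, 0 ≤ s → s ≤ t → t ≤ T0 →
      IntervalIntegrable (fun s => Gop K f (c s) (c s) - Gop K f (d s) (d s)) volume s t := by
    intro f hf s t hs hst ht
    rw [intervalIntegrable_iff_integrableOn_Ioc_of_le hst]
    exact (hint f hf).mono_set (Ioc_subset_Ioc hs ht)
  have S1 : ∀ f, BddMeas f → ∀ s t, 0 ≤ s → s ≤ t → t ≤ T0 →
      ∫ x in Ioi (0:ℝ), f x * (W t x - W s x) =
        ∫ r in s..t, (Gop K f (c r) (c r) - Gop K f (d r) (d r)) := by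
    intro f hf s t hs hst ht
    have h1 := hweak f hf t ⟨hs.trans hst, ht⟩
    have h2 := hweak f hf s ⟨hs, hst.trans ht⟩
    rw [← intervalIntegral.integral_of_le (hs.trans hst)] at h1
    rw [← intervalIntegral.integral_of_le hs] at h2
    rw [← intervalIntegral.integral_interval_sub_left (ii f hf 0 t le_rfl (hs.trans hst) ht)
      (ii f hf 0 s le_rfl hs (hst.trans ht)), ← h1, ← h2,
      ← integral_sub (bdd_mul_int hw hf (gW t ⟨hs.trans hst, ht⟩))
        (bdd_mul_int hw hf (gW s ⟨hs, hst.trans ht⟩))]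
    congr 1; ext x; ring
  have bs : ∀ g, Measurable g → BddMeas (sgf g) := fun g hg => ⟨sgf_meas hg, 1, sgf_abs g⟩
  have S2 : ∀ s t, 0 ≤ s → s ≤ t → t ≤ T0 →
      ∫ x in Ioi (0:ℝ), |W t x - W s x| ≤ 8 * M * (M * A) * (t - s) := by
    intro s t hs hst ht
    have gt := gW t ⟨hs.trans hst, ht⟩
    have gs := gW s ⟨hs, hst.trans ht⟩
    have hb := bs _ (gt.sub hw gs).1
    have h1 := S1 _ hb s t hs hst ht
    have h2 : ∫ x in Ioi (0:ℝ), |W t x - W s x| =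
        ∫ x in Ioi (0:ℝ), sgf (fun x => W t x - W s x) x * (W t x - W s x) := by
      congr 1; ext x; exact (sgf_mul (fun x => W t x - W s x) x).symm
    rw [h2, h1]
    refine (le_abs_self _).trans ?_
    have := intervalIntegral.norm_integral_le_of_norm_le_const (a := s) (b := t)
      (C := 8 * M * (M * A))
      (f := fun r => Gop K (sgf fun x => W t x - W s x) (c r) (c r)
        - Gop K (sgf fun x => W t x - W s x) (d r) (d r)) ?_
    · rwa [abs_of_nonneg (by linarith : 0 ≤ t - s)] at this
    intro r hr
    rw [uIoc_of_le hst] at hr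
    have hr' : r ∈ Icc 0 T0 := ⟨hs.trans hr.1.le, hr.2.trans ht⟩
    have bnd : ∀ g, Good w g → I2 w g ≤ M →
        |Gop K (sgf fun x => W t x - W s x) g g| ≤ 4 * M * (M * A) := by
      intro g hg hgM
      have h3 := G_abs hw hb.1 (sgf_abs _) hg hg
      have h4 := (I1_le_I2 hw hg).trans hgM
      have h5 := I1_nonneg hw g
      refine h3.trans ?_
      rw [mul_one]
      gcongr
    rw [Real.norm_eq_abs]
    refine (abs_sub _ _).trans ?_
    linarith [bnd _ (gc r hr') (mc r hr'), bnd _ (gd r hr') (md r hr')]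
  have S3 : ∀ ε > 0, ∃ δ > 0, ∀ s t, 0 ≤ s → s ≤ t → t ≤ T0 → t - s < δ →
      I1 w (fun x => W t x - W s x) ≤ ε := by
    intro ε hε
    set L := 8 * M * (M * A) with hL
    have L0 : 0 ≤ L := by positivity
    set R := (4 * M + 1) * 2 / ε with hR
    have R0 : 0 < R := by positivity
    refine ⟨ε / (2 * (R * L + 1)), by positivity, ?_⟩
    intro s t hs hst ht hd
    have gt := gW t ⟨hs.trans hst, ht⟩
    have gs := gW s ⟨hs, hst.trans ht⟩
    have g := gt.sub hw gs
    have h1 := I1_interp hw g R0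
    have h2 := trunc_le hw g R0.le
    have h3 := S2 s t hs hst ht
    have h4 : I2 w (fun x => W t x - W s x) ≤ 4 * M := by
      have := I2_sub_le hw gt gs
      linarith [mW t ⟨hs.trans hst, ht⟩, mW s ⟨hs, hst.trans ht⟩]
    have h5 : I2 w (fun x => W t x - W s x) / R ≤ ε / 2 := by
      rw [div_le_iff₀ R0, hR]
      field_simp
      linarith
    have h6 : R * (∫ x in Ioi (0:ℝ), |W t x - W s x|) ≤ ε / 2 := by
      calc _ ≤ R * (L * (t - s)) := by gcongr
        _ = (R * L) * (t - s) := by ring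
        _ ≤ (R * L + 1) * (ε / (2 * (R * L + 1))) := by
            refine mul_le_mul (by linarith) hd.le (by linarith) (by positivity)
        _ = ε / 2 := by field_simp
    linarith
  set u : ℝ → ℝ := fun s => I1 w (W s) with hu
  have tri : ∀ s ∈ Icc 0 T0, ∀ t ∈ Icc 0 T0, u t - u s ≤ I1 w (fun x => W t x - W s x) := by
    intro s hs t ht
    have g := (gW t ht).sub hw (gW s hs)
    have : u t ≤ I1 w (fun x => W t x - W s x) + u s := by
      simp only [hu, I1]
      rw [← integral_add (g.i1 hw) ((gW s hs).i1 hw)]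
      refine integral_mono ((gW t ht).i1 hw) ((g.i1 hw).add ((gW s hs).i1 hw)) fun x => ?_
      simp only
      rw [← mul_add]
      refine mul_le_mul_of_nonneg_left ?_ (hw.w0 x)
      linarith [abs_sub_abs_le_abs_sub (W t x) (W s x)]
    linarith
  have I1c : ∀ s t, I1 w (fun x => W t x - W s x) = I1 w (fun x => W s x - W t x) := by
    intro s t; unfold I1; congr 1; ext x; rw [abs_sub_comm]
  have S4 : ContinuousOn u (Icc 0 T0) := by
    rw [Metric.continuousOn_iff]
    intro t ht ε hε
    obtain ⟨δ, hδ, h⟩ := S3 (ε / 2) (by positivity)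
    refine ⟨δ, hδ, fun s hs hst => ?_⟩
    rw [Real.dist_eq] at *
    have hv : I1 w (fun x => W t x - W s x) ≤ ε / 2 := by
      rcases le_total s t with hle | hle
      · exact h s t hs.1 hle ht.2 (by rw [abs_sub_comm] at hst; exact (le_abs_self _).trans_lt hst)
      · rw [I1c]; exact h t s ht.1 hle hs.2 ((le_abs_self _).trans_lt hst)
    have h1 := tri s hs t ht
    have h2 := tri t ht s hs
    rw [← I1c] at h2
    rw [abs_lt]; constructor <;> linarith
  have uint : ∀ s t, 0 ≤ s → s ≤ t → t ≤ T0 → IntervalIntegrable u volume s t := by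
    intro s t hs hst ht
    refine ContinuousOn.intervalIntegrable (S4.mono ?_)
    rw [uIcc_of_le hst]; exact Icc_subset_Icc hs ht
  have S5 : ∫ x in Ioi (0:ℝ), |W 0 x| = 0 := by
    have h0 : (0:ℝ) ∈ Icc 0 T0 := ⟨le_rfl, hT0⟩
    have := hweak _ (bs _ (gW 0 h0).1) 0 h0
    rw [Ioc_self, setIntegral_empty] at this
    refine Eq.trans ?_ this
    refine integral_congr_ae (Eventually.of_forall fun x => ?_)
    exact (sgf_mul (W 0) x).symm
  have S8 : ∀ n : ℝ, 0 ≤ n → ∀ t ∈ Icc 0 T0,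
      ∫ x in Ioi (0:ℝ), min (w x) n * |W t x| ≤ 2 * M * A * ∫ s in (0:ℝ)..t, u s := by
    intro n hn T1 hT1
    have hm := mono_of_small (T0 := T1)
      (H := fun t => (∫ x in Ioi (0:ℝ), min (w x) n * |W t x|)
        - 2 * M * A * ∫ s in (0:ℝ)..t, u s) hT1.1 ?_
    · simp only [intervalIntegral.integral_same, mul_zero, sub_zero] at hm
      have := trunc_le hw (gW 0 ⟨le_rfl, hT0⟩) hn
      rw [S5, mul_zero] at this
      linarith
    intro ε hε
    obtain ⟨δ, hδ, hv⟩ := S3 (ε / (4 * n * M * A + 1)) (by positivity)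
    refine ⟨δ, hδ, ?_⟩
    intro s t hs hst ht1 hd
    have ht : t ≤ T0 := ht1.trans hT1.2
    have htm : t ∈ Icc 0 T0 := ⟨hs.trans hst, ht⟩
    have hsm : s ∈ Icc 0 T0 := ⟨hs, hst.trans ht⟩
    have hmin0 : ∀ x, 0 ≤ min (w x) n := fun x => le_min (hw.w0 x) hn
    set f : ℝ → ℝ := fun x => sgf (W t) x * min (w x) n with hf
    have fm : ∀ x, |f x| ≤ min (w x) n := by
      intro x
      rw [hf, abs_mul, abs_of_nonneg (hmin0 x)]
      exact mul_le_of_le_one_left (hmin0 x) (sgf_abs _ _)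
    have fb : BddMeas f := by
      refine ⟨?_, n, fun x => (fm x).trans (min_le_right _ _)⟩
      have := sgf_meas (gW t htm).1
      have := hw.wm
      fun_prop
    have h1 : (∫ x in Ioi (0:ℝ), min (w x) n * |W t x|) - (∫ x in Ioi (0:ℝ), min (w x) n * |W s x|)
        ≤ ∫ x in Ioi (0:ℝ), f x * (W t x - W s x) := by
      rw [← integral_sub (trunc_int hw (gW t htm) hn) (trunc_int hw (gW s hsm) hn)]
      refine integral_mono ((trunc_int hw (gW t htm) hn).sub (trunc_int hw (gW s hsm) hn))
        (bdd_mul_int hw fb ((gW t htm).sub hw (gW s hsm))) fun x => ?_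
      simp only [hf]
      have e1 := sgf_mul (W t) x
      have e2 := sgf_le (W t) x (W s x)
      calc min (w x) n * |W t x| - min (w x) n * |W s x| = min (w x) n * (|W t x| - |W s x|) := by
            ring
        _ ≤ min (w x) n * (sgf (W t) x * W t x - sgf (W t) x * W s x) :=
            mul_le_mul_of_nonneg_left (by linarith) (hmin0 x)
        _ = _ := by ring
    rw [S1 f fb s t hs hst ht] at h1
    have h2 : ∫ r in s..t, (Gop K f (c r) (c r) - Gop K f (d r) (d r)) ≤
        ∫ r in s..t, (2 * M * A * u r + ε) := by
      refine intervalIntegral.integral_mono_on hst (ii f fb s t hs hst ht)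
        (((uint s t hs hst ht).const_mul _).add intervalIntegrable_const) ?_
      intro r hr
      have hrm : r ∈ Icc 0 T0 := ⟨hs.trans hr.1, hr.2.trans ht⟩
      rw [G_split hw fb (gc r hrm) (gd r hrm)]
      have a1 := G_fst hw hn (sgf_meas (gW t htm).1) (sgf_abs _) (gW r hrm) (gc r hrm)
        ((gW t htm).sub hw (gW r hrm)) (pc r hrm) (fun x => sgf_err (W t) x (W r x))
      have a2 := G_snd hw fb (fun x => (fm x).trans (min_le_left _ _)) (gd r hrm) (gW r hrm)
      have a3 := hv r t (hs.trans hr.1) hr.2 ht (by linarith [hr.1])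
      have a4 : I1 w (c r) ≤ M := (I1_le_I2 hw (gc r hrm)).trans (mc r hrm)
      have a5 := I1_nonneg hw (c r)
      have a6 := md r hrm
      have u0 : 0 ≤ u r := I1_nonneg hw _
      have v0 := I1_nonneg hw (fun x => W t x - W r x)
      have b1 : (I1 w (W r) + 4 * n * I1 w (fun x => W t x - W r x)) * (I1 w (c r) * A)
          ≤ (u r + 4 * n * (ε / (4 * n * M * A + 1))) * (M * A) := by
        gcongr
      have b2 : I2 w (d r) * (I1 w (W r) * A) ≤ M * (u r * A) := by
        have : 0 ≤ u r * A := by positivity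
        exact mul_le_mul_of_nonneg_right a6 this
      have b3 : 4 * n * (ε / (4 * n * M * A + 1)) * (M * A) ≤ ε := by
        have hp : 0 < 4 * n * M * A + 1 := by positivity
        have : 4 * n * (ε / (4 * n * M * A + 1)) * (M * A)
          = (4 * n * M * A) * ε / (4 * n * M * A + 1) := by ring
        rw [this, div_le_iff₀ hp]; nlinarith
      have c1 := a1.trans b1
      have c2 := a2.trans b2
      have : Gop K f (W r) (c r) + Gop K f (d r) (W r) ≤ 2 * M * A * u r + ε := by
        have c3 : Gop K f (W r) (c r) ≤ (u r + 4 * n * (ε / (4 * n * M * A + 1))) * (M * A) := c1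
        nlinarith
      exact this
    rw [intervalIntegral.integral_add ((uint s t hs hst ht).const_mul _) intervalIntegrable_const,
      intervalIntegral.integral_const_mul, intervalIntegral.integral_const, smul_eq_mul] at h2
    have h3 := intervalIntegral.integral_interval_sub_left
      (uint 0 t le_rfl (hs.trans hst) ht) (uint 0 s le_rfl hs (hst.trans ht))
    rw [← h3] at h2
    nlinarith
  refine gron hT0 S4 (fun t _ => I1_nonneg hw _) (by positivity : 0 ≤ 2 * M * A) ?_
  intro t ht
  refine le_of_forall_pos_le_add fun ε hε => ?_
  have hR : 0 < (2 * M + 1) / ε := by positivity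
  have h1 := I1_interp hw (gW t ht) hR
  have h2 := S8 _ hR.le t ht
  have h3 : I2 w (W t) / ((2 * M + 1) / ε) ≤ ε := by
    rw [div_le_iff₀ hR, mul_div_cancel₀ _ hε.ne']
    linarith [mW t ht]
  have : u t = I1 w (W t) := rfl
  linarith

end

lemma weak_G {K : ℝ → ℝ → ℝ → ℝ} {β r : ℝ} {T : ℝ≥0∞} {c₀ : ℝ → ℝ} {c : ℝ → ℝ → ℝ}
    (hc : IsWeakSolution K β r T c₀ c) {t : ℝ} (ht : 0 ≤ t) (htT : ENNReal.ofReal t < T)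
    {f : ℝ → ℝ} (hf : BddMeas f) :
    IntegrableOn (fun s => Gop K f (c s) (c s)) (Ioc 0 t) ∧
    ∫ x in Ioi (0:ℝ), f x * (c t x - c₀ x) = ∫ s in Ioc 0 t, Gop K f (c s) (c s) := by
  obtain ⟨M, hM⟩ := hf.2
  have hi : IntegrableOn (fun p : ℝ × ℝ × ℝ × ℝ => dLap f p.2.2.2 p.2.1 *
          (K p.2.1 p.2.2.1 p.2.2.2 * c p.1 p.2.1 * c p.1 p.2.2.1)) ((Ioc (0:ℝ) t) ×ˢ Dcgedg) := by
    refine Integrable.bdd_mul (hc.integ t ht htT) ?_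
      (Eventually.of_forall fun p => dLap_abs hM _ _)
    exact ((dLap_meas hf.1).comp measurable_snd).aestronglyMeasurable
  have hw := hc.weak t ht htT f hf
  have hm : (volume : Measure (ℝ × ℝ × ℝ × ℝ)).restrict ((Ioc (0:ℝ) t) ×ˢ Dcgedg) =
      (volume.restrict (Ioc (0:ℝ) t)).prod (volume.restrict Dcgedg) := by
    rw [Measure.prod_restrict]; rfl
  rw [IntegrableOn, hm] at hi
  rw [hm, integral_prod _ hi] at hw
  exact ⟨hi.integral_prod_left, hw⟩

lemma good_of {a l : ℝ} {g : ℝ → ℝ} (hg : MemY (2 * a) (2 * l) g) :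
    Good (omW a l) g ∧ I2 (omW a l) g ≤ 2 * Ynorm (2 * a) (2 * l) g := by
  have hpt : ∀ x ∈ Ioi (0:ℝ), omW a l x ^ 2 * |g x| ≤
      2 * ((x ^ (-(2 * a)) + x ^ (2 * l)) * |g x|) := by
    intro x hx
    have hx : 0 < x := hx
    unfold omW
    rw [abs_of_pos hx, show -(2 * a) = -a + -a by ring, show 2 * l = l + l by ring,
      Real.rpow_add hx, Real.rpow_add hx, ← mul_assoc]
    refine mul_le_mul_of_nonneg_right ?_ (abs_nonneg _)
    nlinarith [sq_nonneg (x ^ (-a) - x ^ l)]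
  have hi : IntegrableOn (fun x => omW a l x ^ 2 * |g x|) (Ioi (0:ℝ)) := by
    refine Integrable.mono' (hg.2.const_mul 2) ?_ ?_
    · have := hg.1
      exact (by unfold omW; fun_prop :
        Measurable (fun x => omW a l x ^ 2 * |g x|)).aestronglyMeasurable
    · filter_upwards [ae_restrict_mem measurableSet_Ioi] with x hx
      rw [Real.norm_eq_abs, abs_of_nonneg (by positivity)]
      exact hpt x hx
  refine ⟨⟨hg.1, hi⟩, ?_⟩
  unfold I2 Ynorm
  rw [← integral_const_mul]
  exact setIntegral_mono_on hi (hg.2.const_mul 2) measurableSet_Ioi hpt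

/-- Uniqueness for CGEDG. -/
theorem cgedg_uniqueness
    (K : ℝ → ℝ → ℝ → ℝ) (lam a : ℝ) (φ : ℝ → ℝ)
    (hK : IsKernel K) (hlam : lam ∈ Icc (1:ℝ) 2) (ha : 0 ≤ a)
    (hφ : MemYplus a lam φ)
    (hbound : ∀ x y z : ℝ, 0 ≤ x → 0 ≤ y → 0 ≤ z →
      K x y z ≤ hatm x ^ (-a) * hatm y ^ (-a) * checkm x ^ lam * checkm y ^ lam * φ z)
    (hsing : 0 < a → ∃ Ca > 0, SingularBound K a lam Ca φ)
    (c₀ : ℝ → ℝ) (hc₀ : MemYplus (2*a) (2*lam) c₀)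
    (T : ℝ≥0∞) (hT : 0 < T)
    (c d : ℝ → ℝ → ℝ)
    (hc : IsWeakSolution K (2*a) (2*lam) T c₀ c)
    (hd : IsWeakSolution K (2*a) (2*lam) T c₀ d) :
    ∀ t : ℝ, 0 ≤ t → ENNReal.ofReal t < T →
      c t =ᵐ[volume.restrict (Ioi (0:ℝ))] d t := by
  obtain ⟨Φ, hw⟩ := kbd_of K lam a φ hK hlam ha hφ hbound hsing
  intro T0 hT0 hT0T
  have sub : ∀ s ∈ Icc 0 T0, 0 ≤ s ∧ ENNReal.ofReal s < T := fun s hs =>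
    ⟨hs.1, (ENNReal.ofReal_le_ofReal hs.2).trans_lt hT0T⟩
  obtain ⟨Mc, hMc⟩ := hc.bdd
  obtain ⟨Md, hMd⟩ := hd.bdd
  have gc := fun s hs => good_of (hc.mem s (sub s hs).1 (sub s hs).2).1
  have gd := fun s hs => good_of (hd.mem s (sub s hs).1 (sub s hs).2).1
  have g0 := (good_of hc₀.1).1
  have key := abs_unique hw (c := c) (d := d) (M := max (2 * Mc) (2 * Md)) hT0
    (fun s hs => (gc s hs).1) (fun s hs => (gd s hs).1)
    (fun s hs => (hc.mem s (sub s hs).1 (sub s hs).2).2)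
    (fun s hs => le_max_of_le_left ((gc s hs).2.trans
      (by linarith [hMc s (sub s hs).1 (sub s hs).2])))
    (fun s hs => le_max_of_le_right ((gd s hs).2.trans
      (by linarith [hMd s (sub s hs).1 (sub s hs).2])))
    (fun f hf => (weak_G hc hT0 hT0T hf).1.sub (weak_G hd hT0 hT0T hf).1)
    (fun f hf t ht => by
      have h1 := weak_G hc (sub t ht).1 (sub t ht).2 hf
      have h2 := weak_G hd (sub t ht).1 (sub t ht).2 hf
      rw [integral_sub h1.1 h2.1, ← h1.2, ← h2.2,
        ← integral_sub (bdd_mul_int hw hf ((gc t ht).1.sub hw g0))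
          (bdd_mul_int hw hf ((gd t ht).1.sub hw g0))]
      congr 1; ext x; ring)
    T0 ⟨hT0, le_rfl⟩
  have hm : T0 ∈ Icc 0 T0 := ⟨hT0, le_rfl⟩
  have hz := (integral_eq_zero_iff_of_nonneg
    (fun x => mul_nonneg (hw.w0 x) (abs_nonneg _))
    (((gc T0 hm).1.sub hw (gd T0 hm).1).i1 hw)).1 key
  filter_upwards [hz, ae_restrict_mem measurableSet_Ioi] with x hx hx0
  have h1 := hw.w1 x hx0
  simp only [Pi.zero_apply, mul_eq_zero, abs_eq_zero] at hx
  rcases hx with h | h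
  · linarith
  · linarith
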